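/- Let β > 0 and let ν be a compactly supported probability measure on ℝ. Let ρ be a compactly supported probability measure on ℝ such that for some ε > 0 and all u ∈ (−ε,ε)∖{0} one has u ∈ D̂_ρ ∩ D̂_ν and R̂_ρ(u) = β²u + R̂_ν(u) (i.e. ρ is the free additive convolution of the semicircle law on [−2β,2β] with ν). Then for every real z < z*_ρ: U_ρ(z) = inf{ β²g²/2 + ∫ log(λ − z − β²g) dν(λ) : 0 < g < g*_ρ and β²g < a_ν − z }. -/

import Mathlib

/-!
Write `a` for the left endpoint of a support, `s(z) = z + β² G_ρ(z)` and
`V_μ(z) = ∫ log (λ - z) dμ(λ)`, so that `U_ρ = V_ρ` to the left of `a_ρ`.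

The relation between the `R`-transforms says that `G_ν(s(z)) = G_ρ(z)` for `z` near `-∞`, and by
analyticity this persists on every half-line `(-∞, z₁)` on which `s < a_ν` (`subord_identity`).
In fact `s < a_ν` on all of `(-∞, a_ρ)` (`subord_lt_aInf`). Otherwise `s(z₀) = a_ν` for some
`z₀ < a_ρ`; since `s' ≥ 1`, `s` has an analytic local inverse at `a_ν`, and `G_ρ ∘ s⁻¹` continues
`G_ν` analytically across `a_ν`. This contradicts Pringsheim's theorem (`no_continuation`): the
power series of `G_ν` at `h < a_ν` has the positive coefficients `∫ (λ - h)⁻⁽ⁿ⁺¹⁾ dν(λ)`, and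
`a_ν` lies in the support.

It follows that `V_ρ(z) = β² G_ρ(z)² / 2 + V_ν(s(z))` for `z < a_ρ` (`logpot_subord`): both sides
have derivative `-G_ρ`, and their difference tends to `0` at `-∞`. Hence the functional takes the
value `U_ρ(z)` at `g = G_ρ(z)`.

For any other admissible `g`, the intermediate value theorem provides `y < a_ρ` with
`z + β² g = s(y)`, i.e. `y - z = β² (g - G_ρ(y))`. The formula for `V_ν(s(y))` turns the value of
the functional at `g` into `V_ρ(y) + (y - z) G_ρ(y) + (y - z)² / (2 β²)`, which is at least
`V_ρ(z)` by the tangent line inequality for the concave function `V_ρ` (`logpot_le`).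
-/

open MeasureTheory Filter Set

noncomputable section

/-- The topological support of a Borel measure on `ℝ`. -/
def msupp (μ : Measure ℝ) : Set ℝ := {x : ℝ | ∀ U ∈ nhds x, μ U ≠ 0}

/-- Compact support: some compact set has full measure. -/
def HasCompactSupp (μ : Measure ℝ) : Prop := ∃ K : Set ℝ, IsCompact K ∧ μ K = 1

/-- `a_μ`, the infimum of the support. -/
def aInf (μ : Measure ℝ) : ℝ := sInf (msupp μ)

/-- `b_μ`, the supremum of the support. -/
def bSup (μ : Measure ℝ) : ℝ := sSup (msupp μ)

/-- The (real) Stieltjes transform `G_μ(z) = ∫ (λ - z)⁻¹ dμ(λ)`. -/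
def Gst (μ : Measure ℝ) (z : ℝ) : ℝ := ∫ l, (l - z)⁻¹ ∂μ

/-- `G_μ(a_μ) = lim_{z ↑ a_μ} G_μ(z) ∈ (0,∞]`, as the supremum (in `EReal`) of the values of
`G_μ` on `(-∞, a_μ)` (the two agree since `G_μ` is increasing there). -/
def GaSup (μ : Measure ℝ) : EReal :=
  sSup ((fun z => ((Gst μ z : ℝ) : EReal)) '' Set.Iio (aInf μ))

/-- `G_μ(b_μ) = lim_{z ↓ b_μ} G_μ(z) ∈ [-∞,0)`, as the infimum (in `EReal`) of the values of
`G_μ` on `(b_μ, ∞)` (the two agree since `G_μ` is increasing there). -/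
def GbInf (μ : Measure ℝ) : EReal :=
  sInf ((fun z => ((Gst μ z : ℝ) : EReal)) '' Set.Ioi (bSup μ))

/-- The interval `D̂_μ = (-G_μ(a_μ), -G_μ(b_μ)) ⊆ ℝ`. -/
def Dhat (μ : Measure ℝ) : Set ℝ :=
  {u : ℝ | -(GaSup μ) < (u : EReal) ∧ (u : EReal) < -(GbInf μ)}

/-- The inverse `G_μ^⟨-1⟩` of the restriction of `G_μ` to `ℝ ∖ [a_μ, b_μ]`. -/
def Ginv (μ : Measure ℝ) (g : ℝ) : ℝ :=
  Function.invFunOn (Gst μ) (Set.Iio (aInf μ) ∪ Set.Ioi (bSup μ)) g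

/-- The real `R`-transform `R̂_μ(u) = G_μ^⟨-1⟩(-u) - u⁻¹`, meaningful for `u ∈ D̂_μ ∖ {0}`. -/
def Rhat (μ : Measure ℝ) (u : ℝ) : ℝ := Ginv μ (-u) - u⁻¹

/-- `ρ` is a free additive convolution of `μ` and `ν`. -/
def IsFreeAdd (μ ν ρ : Measure ℝ) : Prop :=
  IsProbabilityMeasure ρ ∧ HasCompactSupp ρ ∧
  ∃ ε > (0 : ℝ), ∀ u : ℝ, u ∈ Set.Ioo (-ε) ε → u ≠ 0 →
    u ∈ Dhat ρ ∧ u ∈ Dhat μ ∧ u ∈ Dhat ν ∧ Rhat ρ u = Rhat μ u + Rhat ν u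

/-- `μ` is nondegenerate: not a point mass. -/
def Nondeg (μ : Measure ℝ) : Prop := ¬ ∃ c : ℝ, μ = Measure.dirac c

/-- The logarithmic potential `U_ρ(z) = ∫ log |z - λ| dρ(λ)`. -/
def Upot (ρ : Measure ℝ) (z : ℝ) : ℝ := ∫ l, Real.log |z - l| ∂ρ

/-- `E_{μ,ν,z}(g) = ∫₀^g s R̂_μ'(-s) ds + ∫ log (λ - z + R̂_μ(-g)) dν(λ)`. -/
def Efun (μ ν : Measure ℝ) (z : ℝ) (g : ℝ) : ℝ :=
  (∫ s in (0:ℝ)..g, s * deriv (Rhat μ) (-s)) + ∫ l, Real.log (l - z + Rhat μ (-g)) ∂ν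

/-- The domain `Ê_{μ,ν,z}` of `E_{μ,ν,z}`. -/
def Ehat (μ ν : Measure ℝ) (z : ℝ) : Set ℝ :=
  {g : ℝ | -g ∈ Dhat μ ∧ g ≠ 0 ∧ z - Rhat μ (-g) < aInf ν}

/-- `F̂_{μ,ν}(h) = R̂_μ(-G_ν(h)) + h`. -/
def Fhat (μ ν : Measure ℝ) (h : ℝ) : ℝ := Rhat μ (-(Gst ν h)) + h

/-- The domain of `F̂_{μ,ν}`. -/
def FhatDom (μ ν : Measure ℝ) : Set ℝ := {h : ℝ | h < aInf ν ∧ -(Gst ν h) ∈ Dhat μ}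

/-- `Ĥ_{μ,ν}`: points of the domain to the left of which `F̂_{μ,ν}'` is positive. -/
def Hhat (μ ν : Measure ℝ) : Set ℝ :=
  {h : ℝ | h ∈ FhatDom μ ν ∧ ∀ t ∈ FhatDom μ ν, t < h → 0 < deriv (Fhat μ ν) t}

/-- `h*_{μ,ν} = sup Ĥ_{μ,ν}`. -/
def hstar (μ ν : Measure ℝ) : ℝ := sSup (Hhat μ ν)

end

open Topology

/-! ### Stieltjes transforms to the left of the support -/

lemma msupp_eq (μ : Measure ℝ) : msupp μ = μ.support := by
  ext x
  simp [msupp, Measure.mem_support_iff_forall, pos_iff_ne_zero]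

lemma supp_facts (μ : Measure ℝ) [IsProbabilityMeasure μ] (hc : HasCompactSupp μ) :
    aInf μ ∈ msupp μ ∧ ∀ᵐ l ∂μ, aInf μ ≤ l ∧ l ≤ bSup μ := by
  obtain ⟨K, hK, hK1⟩ := hc
  have hKae : K ∈ ae μ := by
    rw [mem_ae_iff, prob_compl_eq_zero_iff hK.isClosed.measurableSet]
    exact hK1
  have hsub : msupp μ ⊆ K := by
    rw [msupp_eq]
    exact Measure.support_subset_of_isClosed hK.isClosed hKae
  have hcl : IsClosed (msupp μ) := by rw [msupp_eq]; exact Measure.isClosed_support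
  have hcomp : IsCompact (msupp μ) := hK.of_isClosed_subset hcl hsub
  have hne : (msupp μ).Nonempty := by
    rw [msupp_eq]; exact Measure.nonempty_support (IsProbabilityMeasure.ne_zero μ)
  refine ⟨hcl.csInf_mem hne hcomp.bddBelow, ?_⟩
  have h : ∀ᵐ l ∂μ, l ∈ msupp μ := by
    rw [msupp_eq]; exact Measure.support_mem_ae
  filter_upwards [h] with l hl
  exact ⟨csInf_le hcomp.bddBelow hl, le_csSup hcomp.bddAbove hl⟩

lemma Gst_nonpos {μ : Measure ℝ} {a b z : ℝ} (hs : ∀ᵐ l ∂μ, a ≤ l ∧ l ≤ b) (hz : b < z) :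
    Gst μ z ≤ 0 := by
  refine integral_nonpos_of_ae ?_
  filter_upwards [hs] with l hl
  exact inv_nonpos.2 (by linarith [hl.2])

section basic

variable {μ : Measure ℝ} [IsProbabilityMeasure μ] {a b z : ℝ}

lemma le_of_ae (hs : ∀ᵐ l ∂μ, a ≤ l ∧ l ≤ b) : a ≤ b := by
  obtain ⟨l, hl⟩ := hs.exists
  exact hl.1.trans hl.2

lemma inv_pow_bound (n : ℕ) (hz : z < a) {l : ℝ} (hl : a ≤ l) :
    ‖((l - z)⁻¹) ^ n‖ ≤ ((a - z)⁻¹) ^ n := by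
  have h1 : 0 < a - z := sub_pos.2 hz
  have h2 : 0 < l - z := by linarith
  rw [Real.norm_of_nonneg (by positivity)]
  gcongr

lemma integrable_inv_pow (hs : ∀ᵐ l ∂μ, a ≤ l ∧ l ≤ b) (hz : z < a) (n : ℕ) :
    Integrable (fun l => ((l - z)⁻¹) ^ n) μ := by
  refine Integrable.of_bound (by fun_prop) (((a - z)⁻¹) ^ n) ?_
  filter_upwards [hs] with l hl using inv_pow_bound n hz hl.1

lemma integrable_inv (hs : ∀ᵐ l ∂μ, a ≤ l ∧ l ≤ b) (hz : z < a) :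
    Integrable (fun l => (l - z)⁻¹) μ := by
  simpa using integrable_inv_pow hs hz 1

lemma integrable_log (hs : ∀ᵐ l ∂μ, a ≤ l ∧ l ≤ b) (hz : z < a) :
    Integrable (fun l => Real.log (l - z)) μ := by
  refine Integrable.of_bound
    (Real.measurable_log.comp (measurable_id.sub_const z)).aestronglyMeasurable
    (|Real.log (a - z)| + |Real.log (b - z)|) ?_
  filter_upwards [hs] with l hl
  have h1 : Real.log (a - z) ≤ Real.log (l - z) :=
    Real.log_le_log (by linarith) (by linarith [hl.1])
  have h2 : Real.log (l - z) ≤ Real.log (b - z) :=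
    Real.log_le_log (by linarith [hl.1]) (by linarith [hl.2])
  rw [Real.norm_eq_abs]
  exact abs_le.2 ⟨by linarith [neg_abs_le (Real.log (a - z)), abs_nonneg (Real.log (b - z))],
    by linarith [le_abs_self (Real.log (b - z)), abs_nonneg (Real.log (a - z))]⟩

lemma Gst_le (hs : ∀ᵐ l ∂μ, a ≤ l ∧ l ≤ b) (hz : z < a) : Gst μ z ≤ (a - z)⁻¹ := by
  have h : ∫ l, (l - z)⁻¹ ∂μ ≤ ∫ _, (a - z)⁻¹ ∂μ := by
    refine integral_mono_ae (integrable_inv hs hz) (integrable_const _) ?_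
    filter_upwards [hs] with l hl
    exact inv_anti₀ (by linarith) (by linarith [hl.1])
  simpa [Gst] using h

lemma le_Gst (hs : ∀ᵐ l ∂μ, a ≤ l ∧ l ≤ b) (hz : z < a) : (b - z)⁻¹ ≤ Gst μ z := by
  have h : ∫ _, (b - z)⁻¹ ∂μ ≤ ∫ l, (l - z)⁻¹ ∂μ := by
    refine integral_mono_ae (integrable_const _) (integrable_inv hs hz) ?_
    filter_upwards [hs] with l hl
    exact inv_anti₀ (by linarith [hl.1]) (by linarith [hl.2])
  simpa [Gst] using h

lemma Gst_pos (hs : ∀ᵐ l ∂μ, a ≤ l ∧ l ≤ b) (hz : z < a) : 0 < Gst μ z := by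
  have := le_of_ae hs
  exact lt_of_lt_of_le (inv_pos.2 (by linarith)) (le_Gst hs hz)

/-- `G_μ` is strictly increasing to the left of the support: for `z < y < a` the integrands
differ by at least `(y - z) / (b - z)²` on the support. -/
lemma Gst_lt (hs : ∀ᵐ l ∂μ, a ≤ l ∧ l ≤ b) {y : ℝ} (hzy : z < y) (hy : y < a) :
    Gst μ z < Gst μ y := by
  have hab := le_of_ae hs
  have hc : 0 < (y - z) / (b - z) ^ 2 := by
    have h1 : 0 < y - z := by linarith
    have h2 : 0 < b - z := by linarith
    positivity
  have h : ∫ l, ((l - z)⁻¹ + (y - z) / (b - z) ^ 2) ∂μ ≤ ∫ l, (l - y)⁻¹ ∂μ := by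
    refine integral_mono_ae ((integrable_inv hs (hzy.trans hy)).add (integrable_const _))
      (integrable_inv hs hy) ?_
    filter_upwards [hs] with l hl
    have h1 : 0 < l - y := by linarith [hl.1]
    have h2 : 0 < l - z := by linarith [hl.1]
    have h3 : l - z ≤ b - z := by linarith [hl.2]
    have h4 : (l - y)⁻¹ - (l - z)⁻¹ = (y - z) / ((l - y) * (l - z)) := by
      field_simp; ring
    have h5 : (y - z) / (b - z) ^ 2 ≤ (y - z) / ((l - y) * (l - z)) := by
      have : (0:ℝ) ≤ y - z := by linarith
      have h6 : (l - y) * (l - z) ≤ (b - z) ^ 2 := by nlinarith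
      gcongr
    show (l - z)⁻¹ + (y - z) / (b - z) ^ 2 ≤ (l - y)⁻¹
    linarith
  rw [integral_add (integrable_inv hs (hzy.trans hy)) (integrable_const _)] at h
  simp only [integral_const, probReal_univ, one_smul] at h
  unfold Gst
  linarith

lemma Gst_le_Gst (hs : ∀ᵐ l ∂μ, a ≤ l ∧ l ≤ b) {y : ℝ} (hzy : z ≤ y) (hy : y < a) :
    Gst μ z ≤ Gst μ y := by
  rcases hzy.eq_or_lt with rfl | h
  · exact le_rfl
  · exact (Gst_lt hs h hy).le

/-- The power series of `G_μ` at `z < a`: its coefficients are the moments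
`∫ (λ - z)⁻⁽ⁿ⁺¹⁾ dμ(λ)`. -/
noncomputable def Gser (μ : Measure ℝ) (z : ℝ) : FormalMultilinearSeries ℝ ℝ ℝ :=
  FormalMultilinearSeries.ofScalars ℝ (fun n => ∫ l, ((l - z)⁻¹) ^ (n + 1) ∂μ)

lemma Gst_series (hs : ∀ᵐ l ∂μ, a ≤ l ∧ l ≤ b) (hz : z < a) :
    HasFPowerSeriesAt (Gst μ) (Gser μ z) z := by
  have hd : 0 < a - z := sub_pos.2 hz
  rw [hasFPowerSeriesAt_iff]
  filter_upwards [Metric.ball_mem_nhds (0 : ℝ) hd] with x hx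
  have hx' : |x| < a - z := by simpa using hx
  have hq : |x| * (a - z)⁻¹ < 1 := by
    rw [← div_eq_mul_inv, div_lt_one hd]; exact hx'
  have key := hasSum_integral_of_summable_integral_norm (μ := μ)
    (F := fun n l => x ^ n * ((l - z)⁻¹) ^ (n + 1))
    (fun n => (integrable_inv_pow hs hz (n + 1)).const_mul _) ?_
  · have e1 : ∫ l, (∑' n : ℕ, x ^ n * ((l - z)⁻¹) ^ (n + 1)) ∂μ = Gst μ (z + x) := by
      refine integral_congr_ae ?_
      filter_upwards [hs] with l hl
      have h2 : 0 < l - z := by linarith [hl.1]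
      have h3 : |x * (l - z)⁻¹| < 1 := by
        rw [abs_mul, abs_inv, abs_of_pos h2, ← div_eq_mul_inv, div_lt_one h2]
        linarith [hl.1]
      have h4 : l - (z + x) ≠ 0 := by
        have := (abs_lt.1 hx').2
        have := hl.1
        linarith
      have : ∀ n : ℕ, x ^ n * ((l - z)⁻¹) ^ (n + 1) = (l - z)⁻¹ * (x * (l - z)⁻¹) ^ n := by
        intro n; ring
      simp_rw [this]
      rw [tsum_mul_left, tsum_geometric_of_abs_lt_one h3]
      have h5 : 1 - x * (l - z)⁻¹ ≠ 0 := by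
        have := (abs_lt.1 h3).2
        linarith
      rw [← mul_inv]
      congr 1
      field_simp
      ring
    rw [e1] at key
    convert key using 2 with n
    simp [Gser, integral_const_mul]
  · refine Summable.of_nonneg_of_le (fun n => integral_nonneg fun l => norm_nonneg _)
      (fun n => ?_) ((summable_geometric_of_lt_one (by positivity) hq).mul_left ((a - z)⁻¹))
    have : ∫ l, ‖x ^ n * ((l - z)⁻¹) ^ (n + 1)‖ ∂μ
        ≤ ∫ _, (a - z)⁻¹ * (|x| * (a - z)⁻¹) ^ n ∂μ := by
      refine integral_mono_ae ((integrable_inv_pow hs hz (n + 1)).const_mul _).norm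
        (integrable_const _) ?_
      filter_upwards [hs] with l hl
      have := inv_pow_bound (n + 1) hz hl.1
      show ‖x ^ n * ((l - z)⁻¹) ^ (n + 1)‖ ≤ (a - z)⁻¹ * (|x| * (a - z)⁻¹) ^ n
      rw [norm_mul, norm_pow, Real.norm_eq_abs x]
      calc |x| ^ n * ‖((l - z)⁻¹) ^ (n + 1)‖ ≤ |x| ^ n * ((a - z)⁻¹) ^ (n + 1) := by gcongr
        _ = _ := by ring
    simpa using this

/-- The derivative of `G_μ` is the first coefficient of its series, hence nonnegative. -/
lemma Gst_hasDerivAt (hs : ∀ᵐ l ∂μ, a ≤ l ∧ l ≤ b) (hz : z < a) :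
    ∃ g' : ℝ, 0 ≤ g' ∧ HasDerivAt (Gst μ) g' z := by
  refine ⟨_, ?_, (Gst_series hs hz).hasDerivAt⟩
  have : (Gser μ z) 1 (fun _ => 1) = ∫ l, ((l - z)⁻¹) ^ 2 ∂μ := by
    have := FormalMultilinearSeries.coeff_ofScalars (𝕜 := ℝ)
      (p := fun n => ∫ l, ((l - z)⁻¹) ^ (n + 1) ∂μ) (n := 1)
    exact this
  rw [this]
  exact integral_nonneg fun l => by positivity

/-- Pringsheim's theorem for `G_μ`: since all its power series coefficients are positive, `G_μ`
has no analytic continuation across the left endpoint of the support. -/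
lemma no_continuation (hs : ∀ᵐ l ∂μ, a ≤ l ∧ l ≤ b) (ha : a ∈ msupp μ) {f : ℝ → ℝ}
    (hf : AnalyticAt ℝ f a) (heq : ∀ᶠ h in 𝓝[<] a, f h = Gst μ h) : False := by
  obtain ⟨p, r, hp⟩ := hf
  obtain ⟨r', hr'0, hr'⟩ := ENNReal.lt_iff_exists_nnreal_btwn.1 hp.r_pos
  have hp' := hp.mono hr'0 hr'.le
  have hr0 : (0 : ℝ) < r' := by exact_mod_cast hr'0
  obtain ⟨c, hc, hcon⟩ := mem_nhdsLT_iff_exists_Ioo_subset.1 heq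
  have hc : c < a := hc
  -- `a - t` lies in the interval where `f = G_μ`, and the series of `f` there has radius `> 2t`
  obtain ⟨t, ht0, ht⟩ : ∃ t : ℝ, 0 < t ∧ t < min (a - c) (r' / 4) :=
    exists_between (lt_min (by linarith) (by positivity))
  have ht1 := ht.trans_le (min_le_left _ _)
  have ht2 := ht.trans_le (min_le_right _ _)
  have hlt : (‖(-t)‖₊ : ENNReal) < r' := by
    rw [ENNReal.coe_lt_coe, ← NNReal.coe_lt_coe, coe_nnnorm, norm_neg, Real.norm_of_nonneg ht0.le]
    linarith
  have hb := hp'.changeOrigin hlt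
  have hza : a + -t < a := by linarith
  have hev : f =ᶠ[𝓝 (a + -t)] Gst μ := by
    filter_upwards [Ioo_mem_nhds (a := c) (b := a) (by linarith) hza] with h hh using hcon hh
  have hser := HasFPowerSeriesAt.eq_formalMultilinearSeries_of_eventually hb.hasFPowerSeriesAt
    (Gst_series hs hza) hev
  set T : NNReal := ⟨2 * t, by positivity⟩ with hT
  have hrad : (T : ENNReal) < (p.changeOrigin (-t)).radius := by
    refine lt_of_lt_of_le ?_ hb.r_le
    rw [lt_tsub_iff_right, ← ENNReal.coe_add, ENNReal.coe_lt_coe, ← NNReal.coe_lt_coe,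
      NNReal.coe_add, coe_nnnorm, norm_neg, Real.norm_of_nonneg ht0.le]
    show 2 * t + t < r'
    linarith
  have hsum := (p.changeOrigin (-t)).summable_norm_mul_pow hrad
  rw [hser] at hsum
  have hlim := hsum.tendsto_atTop_zero
  set m := μ.real (Ioo (a - t) (a + t)) with hm
  have hmpos : 0 < m := by
    rw [hm, measureReal_def, ENNReal.toReal_pos_iff]
    exact ⟨pos_iff_ne_zero.2 (ha _ (Ioo_mem_nhds (by linarith) (by linarith))),
      measure_lt_top _ _⟩
  have hlow : ∀ n : ℕ, m / (2 * t) ≤ ‖Gser μ (a + -t) n‖ * (T : ℝ) ^ n := by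
    intro n
    have hi := integrable_inv_pow hs hza (n + 1)
    have h1 : ‖Gser μ (a + -t) n‖ = ‖∫ l, ((l - (a + -t))⁻¹) ^ (n + 1) ∂μ‖ := by
      rw [FormalMultilinearSeries.norm_apply_eq_norm_coef]
      simp [Gser]
    have h2 : m * ((2 * t)⁻¹) ^ (n + 1) ≤ ∫ l, ((l - (a + -t))⁻¹) ^ (n + 1) ∂μ := by
      have h3 : ∫ l in Ioo (a - t) (a + t), ((2 * t)⁻¹) ^ (n + 1) ∂μ
          ≤ ∫ l in Ioo (a - t) (a + t), ((l - (a + -t))⁻¹) ^ (n + 1) ∂μ := by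
        refine setIntegral_mono_on (integrable_const _) hi.integrableOn measurableSet_Ioo ?_
        intro l hl
        have : 0 < l - (a + -t) := by linarith [hl.1]
        have : l - (a + -t) ≤ 2 * t := by linarith [hl.2]
        gcongr
      have h4 : ∫ l in Ioo (a - t) (a + t), ((l - (a + -t))⁻¹) ^ (n + 1) ∂μ
          ≤ ∫ l, ((l - (a + -t))⁻¹) ^ (n + 1) ∂μ := by
        refine setIntegral_le_integral hi ?_
        filter_upwards [hs] with l hl
        have : 0 < l - (a + -t) := by linarith [hl.1]
        show 0 ≤ ((l - (a + -t))⁻¹) ^ (n + 1)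
        positivity
      rw [setIntegral_const, smul_eq_mul] at h3
      exact h3.trans h4
    have hTr : (T : ℝ) = 2 * t := rfl
    rw [h1, hTr]
    calc m / (2 * t) = (m * ((2 * t)⁻¹) ^ (n + 1)) * (2 * t) ^ n := by
          rw [inv_pow, pow_succ]
          field_simp
      _ ≤ _ := by
          gcongr
          exact h2.trans (le_abs_self _)
  have h0 := ge_of_tendsto' hlim hlow
  have : 0 < m / (2 * t) := by positivity
  linarith

end basic

/-! ### Logarithmic potentials and the inverse of the Stieltjes transform -/

section logpot

variable {μ : Measure ℝ} [IsProbabilityMeasure μ] {a b z : ℝ}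

lemma logpot_hasDerivAt (hs : ∀ᵐ l ∂μ, a ≤ l ∧ l ≤ b) (hz : z < a) :
    HasDerivAt (fun y => ∫ l, Real.log (l - y) ∂μ) (-Gst μ z) z := by
  have hmid : z < (z + a) / 2 := by linarith
  have h := (hasDerivAt_integral_of_dominated_loc_of_deriv_le (μ := μ) (x₀ := z)
    (F := fun y l => Real.log (l - y)) (F' := fun y l => -(l - y)⁻¹)
    (bound := fun _ => ((a - z) / 2)⁻¹) (Iio_mem_nhds hmid)
    (Eventually.of_forall fun y =>
      (Real.measurable_log.comp (measurable_id.sub_const y)).aestronglyMeasurable)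
    (integrable_log hs hz) (by fun_prop) ?_ (integrable_const _) ?_).2
  · simpa [Gst, integral_neg] using h
  · filter_upwards [hs] with l hl y hy
    have hy : y < (z + a) / 2 := hy
    rw [norm_neg, Real.norm_of_nonneg (inv_nonneg.2 (by linarith [hl.1]))]
    exact inv_anti₀ (by linarith) (by linarith [hl.1])
  · filter_upwards [hs] with l hl y hy
    have hy : y < (z + a) / 2 := hy
    have h1 : l - y ≠ 0 := by
      have := hl.1
      intro h0
      linarith
    have := ((hasDerivAt_id y).const_sub l).log h1
    simpa [neg_div] using this

/-- Tangent line inequality for the concave function `z ↦ ∫ log (λ - z) dμ(λ)`, whose derivative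
is `-G_μ`. -/
lemma logpot_le (hs : ∀ᵐ l ∂μ, a ≤ l ∧ l ≤ b) (hz : z < a) {y : ℝ} (hy : y < a) :
    ∫ l, Real.log (l - z) ∂μ ≤ ∫ l, Real.log (l - y) ∂μ + (y - z) * Gst μ y := by
  have h : ∫ l, Real.log (l - z) ∂μ ≤ ∫ l, (Real.log (l - y) + (y - z) * (l - y)⁻¹) ∂μ := by
    refine integral_mono_ae (integrable_log hs hz)
      ((integrable_log hs hy).add ((integrable_inv hs hy).const_mul _)) ?_
    filter_upwards [hs] with l hl
    have h1 : 0 < l - y := by linarith [hl.1]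
    have h2 : 0 < l - z := by linarith [hl.1]
    have h3 := Real.log_le_sub_one_of_pos (div_pos h2 h1)
    rw [Real.log_div h2.ne' h1.ne'] at h3
    have h4 : (l - z) / (l - y) - 1 = (y - z) * (l - y)⁻¹ := by
      field_simp; ring
    show Real.log (l - z) ≤ Real.log (l - y) + (y - z) * (l - y)⁻¹
    linarith
  rwa [integral_add (integrable_log hs hy) ((integrable_inv hs hy).const_mul _),
    integral_const_mul] at h

lemma logpot_bounds (hs : ∀ᵐ l ∂μ, a ≤ l ∧ l ≤ b) (hz : z < a) :
    Real.log (a - z) ≤ ∫ l, Real.log (l - z) ∂μ ∧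
      ∫ l, Real.log (l - z) ∂μ ≤ Real.log (b - z) := by
  constructor
  · have h : ∫ _, Real.log (a - z) ∂μ ≤ ∫ l, Real.log (l - z) ∂μ := by
      refine integral_mono_ae (integrable_const _) (integrable_log hs hz) ?_
      filter_upwards [hs] with l hl
      exact Real.log_le_log (by linarith) (by linarith [hl.1])
    simpa using h
  · have h : ∫ l, Real.log (l - z) ∂μ ≤ ∫ _, Real.log (b - z) ∂μ := by
      refine integral_mono_ae (integrable_log hs hz) (integrable_const _) ?_
      filter_upwards [hs] with l hl
      exact Real.log_le_log (by linarith [hl.1]) (by linarith [hl.2])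
    simpa using h

/-- No absolute value is needed on the right, since `Real.log` is even. -/
lemma Upot_eq (μ : Measure ℝ) (z : ℝ) : Upot μ z = ∫ l, Real.log (l - z) ∂μ := by
  unfold Upot
  refine integral_congr_ae (Eventually.of_forall fun l => ?_)
  show Real.log |z - l| = Real.log (l - z)
  rw [abs_sub_comm, Real.log_abs]

/-- `G_μ` is injective to the left of the support and nonpositive to the right of it, so
`G_μ^⟨-1⟩` recovers points to the left of the support. -/
lemma Ginv_Gst (hs : ∀ᵐ l ∂μ, aInf μ ≤ l ∧ l ≤ bSup μ) (hz : z < aInf μ) :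
    Ginv μ (Gst μ z) = z := by
  have hex : ∃ w ∈ Iio (aInf μ) ∪ Ioi (bSup μ), Gst μ w = Gst μ z := ⟨z, Or.inl hz, rfl⟩
  have h1 := Function.invFunOn_mem hex
  have h2 : Gst μ (Ginv μ (Gst μ z)) = Gst μ z := Function.invFunOn_eq hex
  change Ginv μ (Gst μ z) ∈ _ at h1
  rcases h1 with h1 | h1
  · rcases lt_trichotomy (Ginv μ (Gst μ z)) z with h | h | h
    · exact absurd h2 (Gst_lt hs h hz).ne
    · exact h
    · exact absurd h2 (Gst_lt hs h h1).ne'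
  · have := Gst_nonpos hs h1
    have := Gst_pos hs hz
    linarith

lemma Gst_continuousAt (hs : ∀ᵐ l ∂μ, a ≤ l ∧ l ≤ b) (hz : z < a) : ContinuousAt (Gst μ) z :=
  (Gst_series hs hz).analyticAt.continuousAt

/-- Every `g` with `0 < g < G_μ(a_μ)` is a value of `G_μ` to the left of the support. -/
lemma exists_Gst_eq (hs : ∀ᵐ l ∂μ, aInf μ ≤ l ∧ l ≤ bSup μ) {g : ℝ} (hg : 0 < g)
    (hlt : (g : EReal) < GaSup μ) : ∃ w < aInf μ, Gst μ w = g := by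
  obtain ⟨_, ⟨w, hw, rfl⟩, hgw⟩ := lt_sSup_iff.1 hlt
  have hw : w < aInf μ := hw
  have hgw : g < Gst μ w := EReal.coe_lt_coe_iff.1 hgw
  have hv : aInf μ - g⁻¹ < aInf μ := by have := inv_pos.2 hg; linarith
  have hvg : Gst μ (aInf μ - g⁻¹) ≤ g := by simpa using Gst_le hs hv
  have hpre : IsPreconnected (Iio (aInf μ)) := isPreconnected_Iio
  have hcont : ContinuousOn (Gst μ) (Iio (aInf μ)) :=
    fun x hx => (Gst_continuousAt hs hx).continuousWithinAt
  obtain ⟨x, hx, hxg⟩ := hpre.intermediate_value hv hw hcont ⟨hvg, hgw.le⟩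
  exact ⟨x, hx, hxg⟩

end logpot

/-! ### Subordination -/

section subordination

variable {ν ρ : Measure ℝ} [IsProbabilityMeasure ν] [IsProbabilityMeasure ρ] {β : ℝ}

/-- The subordination function `z ↦ z + β² G_ρ(z)`. -/
noncomputable def subord (β : ℝ) (ρ : Measure ℝ) (z : ℝ) : ℝ := z + β ^ 2 * Gst ρ z

/-- Near `-∞` the subordination identity is the `R`-transform hypothesis at `u = -G_ρ(z)`. -/
lemma subord_initial (hsν : ∀ᵐ l ∂ν, aInf ν ≤ l ∧ l ≤ bSup ν)
    (hsρ : ∀ᵐ l ∂ρ, aInf ρ ≤ l ∧ l ≤ bSup ρ) {ε : ℝ} (hε : 0 < ε)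
    (hR : ∀ u : ℝ, u ∈ Set.Ioo (-ε) ε → u ≠ 0 →
      u ∈ Dhat ρ ∧ u ∈ Dhat ν ∧ Rhat ρ u = β ^ 2 * u + Rhat ν u) {z : ℝ}
    (hz : z < aInf ρ - ε⁻¹) : Gst ν (subord β ρ z) = Gst ρ z := by
  have hεi := inv_pos.2 hε
  have hza : z < aInf ρ := by linarith
  have hpos := Gst_pos hsρ hza
  have hlt : Gst ρ z < ε := by
    refine (Gst_le hsρ hza).trans_lt ?_
    rw [inv_lt_comm₀ (by linarith) hε]
    linarith
  obtain ⟨-, hD, hRR⟩ := hR (-Gst ρ z) ⟨by linarith, by linarith⟩ (by linarith)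
  have hg : ((Gst ρ z : ℝ) : EReal) < GaSup ν := by
    have := hD.1
    rw [EReal.coe_neg] at this
    exact EReal.neg_lt_neg_iff.1 this
  obtain ⟨h, hh, hhg⟩ := exists_Gst_eq hsν hpos hg
  have e : Ginv ν (Gst ρ z) = h := by rw [← hhg, Ginv_Gst hsν hh]
  simp only [Rhat, neg_neg, Ginv_Gst hsρ hza, e] at hRR
  have : subord β ρ z = h := by unfold subord; linarith
  rw [this, hhg]

lemma subord_analyticAt (hsρ : ∀ᵐ l ∂ρ, aInf ρ ≤ l ∧ l ≤ bSup ρ) {z : ℝ} (hz : z < aInf ρ) :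
    AnalyticAt ℝ (subord β ρ) z :=
  analyticAt_id.add (analyticAt_const.mul (Gst_series hsρ hz).analyticAt)

lemma subord_lt (hsρ : ∀ᵐ l ∂ρ, aInf ρ ≤ l ∧ l ≤ bSup ρ) {y z : ℝ} (hyz : y < z)
    (hz : z < aInf ρ) : subord β ρ y < subord β ρ z := by
  have := mul_le_mul_of_nonneg_left (Gst_le_Gst hsρ hyz.le hz) (sq_nonneg β)
  unfold subord
  linarith

lemma subord_le_shift (hsρ : ∀ᵐ l ∂ρ, aInf ρ ≤ l ∧ l ≤ bSup ρ) {z : ℝ} (hz : z ≤ aInf ρ - 1) :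
    z ≤ subord β ρ z ∧ subord β ρ z ≤ z + β ^ 2 := by
  have hza : z < aInf ρ := by linarith
  have h1 := (Gst_pos hsρ hza).le
  have h2 : Gst ρ z ≤ 1 := (Gst_le hsρ hza).trans (inv_le_one_of_one_le₀ (by linarith))
  have := sq_nonneg β
  unfold subord
  constructor <;> nlinarith

lemma subord_continuousOn (hsρ : ∀ᵐ l ∂ρ, aInf ρ ≤ l ∧ l ≤ bSup ρ) :
    ContinuousOn (subord β ρ) (Iio (aInf ρ)) :=
  fun _ hx => (subord_analyticAt hsρ hx).continuousAt.continuousWithinAt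

/-- Analytic continuation of the subordination identity `G_ν(z + β² G_ρ(z)) = G_ρ(z)` from a
neighbourhood of `-∞` to any half-line on which the left side makes sense. -/
lemma subord_identity (hsν : ∀ᵐ l ∂ν, aInf ν ≤ l ∧ l ≤ bSup ν)
    (hsρ : ∀ᵐ l ∂ρ, aInf ρ ≤ l ∧ l ≤ bSup ρ) {ε : ℝ} (hε : 0 < ε)
    (hR : ∀ u : ℝ, u ∈ Set.Ioo (-ε) ε → u ≠ 0 →
      u ∈ Dhat ρ ∧ u ∈ Dhat ν ∧ Rhat ρ u = β ^ 2 * u + Rhat ν u) {z₁ : ℝ}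
    (hz₁ : z₁ ≤ aInf ρ) (hlt : ∀ z < z₁, subord β ρ z < aInf ν) {z : ℝ} (hz : z < z₁) :
    Gst ν (subord β ρ z) = Gst ρ z := by
  have h1 : AnalyticOnNhd ℝ (Gst ν ∘ subord β ρ) (Iio z₁) := fun x hx =>
    AnalyticAt.comp (Gst_series hsν (hlt x hx)).analyticAt
      (subord_analyticAt hsρ (lt_of_lt_of_le hx hz₁))
  have h2 : AnalyticOnNhd ℝ (Gst ρ) (Iio z₁) := fun x hx =>
    (Gst_series hsρ (lt_of_lt_of_le hx hz₁)).analyticAt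
  obtain ⟨p, hp⟩ := exists_lt (min z₁ (aInf ρ - ε⁻¹))
  have hp1 := hp.trans_le (min_le_left _ _)
  have hp2 := hp.trans_le (min_le_right _ _)
  have hev : (Gst ν ∘ subord β ρ) =ᶠ[𝓝 p] Gst ρ := by
    filter_upwards [Iio_mem_nhds hp2] with x hx using subord_initial hsν hsρ hε hR hx
  exact h1.eqOn_of_preconnected_of_eventuallyEq h2 isPreconnected_Iio hp1 hev hz

/-- The subordination function maps `(-∞, a_ρ)` into `(-∞, a_ν)`: if it reached `a_ν` at a point
`z₀ < a_ρ`, composing `G_ρ` with its analytic local inverse would continue `G_ν` analytically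
across `a_ν`. -/
lemma subord_lt_aInf (hν : aInf ν ∈ msupp ν) (hsν : ∀ᵐ l ∂ν, aInf ν ≤ l ∧ l ≤ bSup ν)
    (hsρ : ∀ᵐ l ∂ρ, aInf ρ ≤ l ∧ l ≤ bSup ρ) {ε : ℝ} (hε : 0 < ε)
    (hR : ∀ u : ℝ, u ∈ Set.Ioo (-ε) ε → u ≠ 0 →
      u ∈ Dhat ρ ∧ u ∈ Dhat ν ∧ Rhat ρ u = β ^ 2 * u + Rhat ν u) {z : ℝ}
    (hz : z < aInf ρ) : subord β ρ z < aInf ν := by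
  by_contra! hcon
  obtain ⟨p, hp⟩ := exists_lt (min (aInf ρ - 1) (aInf ν - β ^ 2))
  have hp1 := hp.trans_le (min_le_left _ _)
  have hp2 := hp.trans_le (min_le_right _ _)
  have hpa : p < aInf ρ := by linarith
  have hps := (subord_le_shift (β := β) hsρ hp1.le).2
  obtain ⟨z₀, hz₀, hz₀s⟩ := isPreconnected_Iio.intermediate_value (a := p) (b := z) hpa hz
    (subord_continuousOn (β := β) hsρ) ⟨by linarith, hcon⟩
  have hz₀ : z₀ < aInf ρ := hz₀
  have hid : ∀ w < z₀, Gst ν (subord β ρ w) = Gst ρ w := fun w hw =>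
    subord_identity hsν hsρ hε hR hz₀.le (fun y hy => hz₀s ▸ subord_lt hsρ hy hz₀) hw
  have han : AnalyticAt ℝ (subord β ρ) z₀ := subord_analyticAt hsρ hz₀
  have hder : deriv (subord β ρ) z₀ ≠ 0 := by
    obtain ⟨g', hg', hd⟩ := Gst_hasDerivAt hsρ hz₀
    have : HasDerivAt (subord β ρ) (1 + β ^ 2 * g') z₀ := (hasDerivAt_id z₀).add (hd.const_mul _)
    rw [this.deriv]
    positivity
  set r := han.hasStrictDerivAt.localInverse _ _ _ hder with hr
  have hra : AnalyticAt ℝ r (subord β ρ z₀) := han.analyticAt_localInverse hder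
  have hr0 : r (subord β ρ z₀) = z₀ := HasStrictFDerivAt.localInverse_apply_image ..
  have hright : ∀ᶠ y in 𝓝 (subord β ρ z₀), subord β ρ (r y) = y :=
    HasStrictDerivAt.eventually_right_inverse ..
  have hfa : AnalyticAt ℝ (Gst ρ ∘ r) (subord β ρ z₀) := by
    refine AnalyticAt.comp ?_ hra
    rw [hr0]
    exact (Gst_series hsρ hz₀).analyticAt
  have hra' : ∀ᶠ y in 𝓝 (subord β ρ z₀), r y < aInf ρ :=
    hra.continuousAt.eventually (by rw [hr0]; exact Iio_mem_nhds hz₀)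
  rw [hz₀s] at hfa hright hra'
  refine no_continuation hsν hν hfa ?_
  filter_upwards [nhdsWithin_le_nhds hright, nhdsWithin_le_nhds hra', self_mem_nhdsWithin]
    with h h1 h2 h3
  have h3 : h < aInf ν := h3
  have hlt : r h < z₀ := by
    by_contra! hge
    rcases hge.eq_or_lt with he | hl
    · rw [← he, hz₀s] at h1
      linarith
    · have := subord_lt (β := β) hsρ hl h2
      rw [h1, hz₀s] at this
      linarith
  have := hid _ hlt
  rw [h1] at this
  exact this.symm

/-- The logarithmic potential of `ρ` in terms of that of `ν` at the subordinated point. Both sides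
have derivative `-G_ρ`, and their difference tends to `0` at `-∞`. -/
lemma logpot_subord (hsν : ∀ᵐ l ∂ν, aInf ν ≤ l ∧ l ≤ bSup ν)
    (hsρ : ∀ᵐ l ∂ρ, aInf ρ ≤ l ∧ l ≤ bSup ρ)
    (hlt : ∀ z < aInf ρ, subord β ρ z < aInf ν)
    (hid : ∀ z < aInf ρ, Gst ν (subord β ρ z) = Gst ρ z) {z : ℝ} (hz : z < aInf ρ) :
    ∫ l, Real.log (l - z) ∂ρ =
      β ^ 2 * Gst ρ z ^ 2 / 2 + ∫ l, Real.log (l - subord β ρ z) ∂ν := by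
  set D : ℝ → ℝ := fun y => ∫ l, Real.log (l - y) ∂ρ -
    (β ^ 2 * Gst ρ y ^ 2 / 2 + ∫ l, Real.log (l - subord β ρ y) ∂ν) with hD
  have hDd : ∀ y < aInf ρ, HasDerivAt D 0 y := by
    intro y hy
    obtain ⟨g', -, hg⟩ := Gst_hasDerivAt hsρ hy
    have hs : HasDerivAt (subord β ρ) (1 + β ^ 2 * g') y := (hasDerivAt_id y).add (hg.const_mul _)
    have hV := (logpot_hasDerivAt hsν (hlt y hy)).comp y hs
    have := (logpot_hasDerivAt hsρ hy).sub ((((hg.pow 2).const_mul (β ^ 2)).div_const 2).add hV)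
    refine HasDerivAt.congr_deriv (f := D) this ?_
    rw [hid y hy]
    push_cast
    ring
  have hconst : ∀ y < aInf ρ, D y = D z := fun y hy =>
    isOpen_Iio.is_const_of_deriv_eq_zero isPreconnected_Iio
      (fun x hx => (hDd x hx).differentiableAt.differentiableWithinAt)
      (fun x hx => (hDd x hx).deriv) hy hz
  -- `C` dominates all the shifts appearing in the logarithmic bounds near `-∞`
  set C : ℝ := |aInf ρ| + |bSup ρ| + |aInf ν| + |bSup ν| + β ^ 2 + 1 with hC
  have hCs := sq_nonneg β
  have hb : ∀ y < -(2 * C), |D y| ≤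
      Real.log ((C - y) / (-C - y)) + β ^ 2 / 2 * (-C - y)⁻¹ ^ 2 := by
    intro y hy
    have h1 := neg_abs_le (aInf ρ)
    have h2 := neg_abs_le (aInf ν)
    have h3 := le_abs_self (bSup ρ)
    have h4 := le_abs_self (bSup ν)
    have h5 := abs_nonneg (aInf ρ)
    have h6 := abs_nonneg (aInf ν)
    have h7 := abs_nonneg (bSup ρ)
    have h8 := abs_nonneg (bSup ν)
    have hCpos : 0 < C := by linarith
    have hya : y ≤ aInf ρ - 1 := by linarith
    have hya' : y < aInf ρ := by linarith
    obtain ⟨hs1, hs2⟩ := subord_le_shift (β := β) hsρ hya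
    obtain ⟨hu1, hu2⟩ := logpot_bounds hsρ hya'
    obtain ⟨hv1, hv2⟩ := logpot_bounds hsν (hlt y hya')
    have hab := le_of_ae hsρ
    have hab' := le_of_ae hsν
    have hs3 := hlt y hya'
    have m1 : Real.log (-C - y) ≤ Real.log (aInf ρ - y) :=
      Real.log_le_log (by linarith) (by linarith)
    have m2 : Real.log (bSup ρ - y) ≤ Real.log (C - y) :=
      Real.log_le_log (by linarith) (by linarith)
    have m3 : Real.log (-C - y) ≤ Real.log (aInf ν - subord β ρ y) :=
      Real.log_le_log (by linarith) (by linarith)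
    have m4 : Real.log (bSup ν - subord β ρ y) ≤ Real.log (C - y) :=
      Real.log_le_log (by linarith) (by linarith)
    have hG1 := (Gst_pos hsρ hya').le
    have hG2 : Gst ρ y ≤ (-C - y)⁻¹ :=
      (Gst_le hsρ hya').trans (inv_anti₀ (by linarith) (by linarith))
    have hG3 : Gst ρ y ^ 2 ≤ (-C - y)⁻¹ ^ 2 := by gcongr
    have hG4 : β ^ 2 / 2 * Gst ρ y ^ 2 ≤ β ^ 2 / 2 * (-C - y)⁻¹ ^ 2 := by gcongr
    have hG5 : 0 ≤ β ^ 2 / 2 * Gst ρ y ^ 2 := by positivity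
    rw [Real.log_div (by linarith) (by linarith)]
    simp only [hD]
    rw [abs_le]
    constructor <;> linarith
  have hinv : Tendsto (fun y : ℝ => (-C - y)⁻¹) atBot (𝓝 0) :=
    (tendsto_const_nhds.add_atTop tendsto_neg_atBot_atTop).inv_tendsto_atTop
  have hlog : Tendsto (fun y : ℝ => Real.log ((C - y) / (-C - y))) atBot (𝓝 0) := by
    have h1 : Tendsto (fun y : ℝ => 1 + 2 * C * (-C - y)⁻¹) atBot (𝓝 1) := by
      simpa using (hinv.const_mul (2 * C)).const_add 1
    have h2 := h1.log one_ne_zero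
    rw [Real.log_one] at h2
    refine h2.congr' ?_
    filter_upwards [eventually_lt_atBot (-C)] with y hy
    have : -C - y ≠ 0 := by linarith
    congr 1
    field_simp
    ring
  have hlim : Tendsto (fun y : ℝ => Real.log ((C - y) / (-C - y)) + β ^ 2 / 2 * (-C - y)⁻¹ ^ 2)
      atBot (𝓝 0) := by
    simpa using hlog.add ((hinv.pow 2).const_mul (β ^ 2 / 2))
  have hle : |D z| ≤ 0 := by
    refine ge_of_tendsto hlim ?_
    filter_upwards [eventually_lt_atBot (-(2 * C)), eventually_lt_atBot (aInf ρ)] with y hy1 hy2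
    rw [← hconst y hy2]
    exact hb y hy1
  have hz0 : D z = 0 := abs_nonpos_iff.1 hle
  exact sub_eq_zero.1 hz0

end subordination

/-! ### The variational formula -/

/-- variational formula for the logarithmic potential of the free additive
convolution of the semicircle law (of parameter `β`) with `ν`. -/
theorem statement1 (β : ℝ) (hβ : 0 < β) (ν ρ : MeasureTheory.Measure ℝ)
    [MeasureTheory.IsProbabilityMeasure ν] [MeasureTheory.IsProbabilityMeasure ρ]
    (hcν : HasCompactSupp ν) (hcρ : HasCompactSupp ρ)
    (hR : ∃ ε > (0 : ℝ), ∀ u : ℝ, u ∈ Set.Ioo (-ε) ε → u ≠ 0 →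
      u ∈ Dhat ρ ∧ u ∈ Dhat ν ∧ Rhat ρ u = β ^ 2 * u + Rhat ν u) :
    ∀ z : ℝ, z < aInf ρ →
      Upot ρ z =
        sInf ((fun g : ℝ => β ^ 2 * g ^ 2 / 2 + ∫ l, Real.log (l - z - β ^ 2 * g) ∂ν) ''
          {g : ℝ | (0 < g ∧ (g : EReal) < GaSup ρ) ∧ β ^ 2 * g < aInf ν - z}) := by

  obtain ⟨ε, hε, hR⟩ := hR
  obtain ⟨hν, hsν⟩ := supp_facts ν hcν
  obtain ⟨-, hsρ⟩ := supp_facts ρ hcρ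
  have hlt : ∀ z < aInf ρ, subord β ρ z < aInf ν := fun z hz => subord_lt_aInf hν hsν hsρ hε hR hz
  have hid : ∀ z < aInf ρ, Gst ν (subord β ρ z) = Gst ρ z := fun z hz =>
    subord_identity hsν hsρ hε hR le_rfl hlt hz
  intro z hz
  rw [Upot_eq]
  symm
  refine IsLeast.csInf_eq ⟨⟨Gst ρ z, ⟨⟨Gst_pos hsρ hz, ?_⟩, ?_⟩, ?_⟩, ?_⟩
  · obtain ⟨y, hzy, hy⟩ := exists_between hz
    refine lt_of_lt_of_le (EReal.coe_lt_coe_iff.2 (Gst_lt hsρ hzy hy)) ?_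
    exact le_sSup ⟨y, hy, rfl⟩
  · have := hlt z hz
    unfold subord at this
    linarith
  · rw [logpot_subord hsν hsρ hlt hid hz]
    simp only [subord, sub_add_eq_sub_sub]
  · rintro _ ⟨g, ⟨⟨hg0, hg⟩, -⟩, rfl⟩
    obtain ⟨w, hw, hwg⟩ := exists_Gst_eq hsρ hg0 hg
    have hβ2 : 0 < β ^ 2 := by positivity
    -- `z + β² g` is a value of the subordination function, taken between `z` and `w`
    have hlow : subord β ρ (min w z) ≤ z + β ^ 2 * g := by
      have := Gst_le_Gst hsρ (min_le_left w z) hw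
      have := min_le_right w z
      unfold subord
      nlinarith
    have hupp : z + β ^ 2 * g ≤ subord β ρ (max w z) := by
      have := Gst_le_Gst hsρ (le_max_left w z) (max_lt hw hz)
      have := le_max_right w z
      unfold subord
      nlinarith
    obtain ⟨y, hy, hys⟩ := isPreconnected_Iio.intermediate_value
      (show min w z ∈ Iio (aInf ρ) from (min_le_left w z).trans_lt hw)
      (show max w z ∈ Iio (aInf ρ) from max_lt hw hz)
      (subord_continuousOn (β := β) hsρ) ⟨hlow, hupp⟩
    have hy : y < aInf ρ := hy
    have h1 := logpot_le hsρ hz hy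
    rw [logpot_subord hsν hsρ hlt hid hy, hys] at h1
    simp only [sub_add_eq_sub_sub] at h1
    have h2 : y - z = β ^ 2 * (g - Gst ρ y) := by
      unfold subord at hys
      linarith
    rw [h2] at h1
    have h3 : 0 ≤ β ^ 2 * (g - Gst ρ y) ^ 2 := by positivity
    refine h1.trans ?_
    show _ ≤ β ^ 2 * g ^ 2 / 2 + ∫ l, Real.log (l - z - β ^ 2 * g) ∂ν
    nlinarith
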